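/- arXiv:2304.03056 — 2 statements merged into one kernel-verified Lean document; each statement's English description precedes it below -/
import Mathlib

section
/- Bernstein-type inequality for the Dirichlet process posterior mean (conditional form via Bayesian bootstrap weights): Let n ≥ 1, fix ε ∈ (0,1) and γ ≥ c₀·ε^{−2} + 1, and let g_0, g_1, …, g_{n+1} ∈ [0,1] with g_0 = 0 and g_{n+1} = 1. Let w ∼ Dir(γ, 1, …, 1, γ) be a Dirichlet random vector on Δ_{n+1} (parameter γ in positions 0 and n+1, and 1 in the n middle positions), and set W = Σ_{i=0}^{n+1} w_i g_i, ĝ = (1/n) Σ_{i=1}^n g_i, and V̂ = (1/n) Σ_{i=1}^n g_i² − ĝ². Then for every δ ∈ (0,1), P( W − ĝ ≥ √( 4 V̂ · log((1+ε)/δ) / (n + 2γ − 1) ) + (4 log((1+ε)/δ) + 5γ)/(n + 2γ − 1) ) ≤ δ. -/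
open MeasureTheory ProbabilityTheory Real Set
open scoped ENNReal

noncomputable section

/-- The absolute constant `c₀ = (2/π)(8 + 49√6/9)²`. -/
def c0 : ℝ := (2 / Real.pi) * (8 + 49 * Real.sqrt 6 / 9) ^ 2

/-- Unnormalized density of `Dir(α)` in the first `m` coordinates. -/
def dirichletDensity (m : ℕ) (α : Fin (m + 1) → ℝ) : (Fin m → ℝ) → ℝ :=
  Set.indicator {x | (∀ i, 0 ≤ x i) ∧ ∑ i, x i ≤ 1}
    (fun x => (∏ i : Fin m, x i ^ (α i.castSucc - 1)) * (1 - ∑ i, x i) ^ (α (Fin.last m) - 1))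

def dirichletBase (m : ℕ) (α : Fin (m + 1) → ℝ) : Measure (Fin m → ℝ) :=
  volume.withDensity fun x => ENNReal.ofReal (dirichletDensity m α x)

/-- The Dirichlet distribution `Dir(α)`, as the law of the vector
`(x₀, …, x_{m-1}, 1 - ∑ x_i)` on the simplex `Δ_m ⊆ ℝ^{m+1}`. -/
def dirichlet (m : ℕ) (α : Fin (m + 1) → ℝ) : Measure (Fin (m + 1) → ℝ) :=
  Measure.map (fun x : Fin m → ℝ => Fin.snoc x (1 - ∑ i, x i))
    ((dirichletBase m α Set.univ)⁻¹ • dirichletBase m α)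

/-- Kullback–Leibler divergence between finitely supported `p, q` (for `p ≪ q`). -/
def klReal {m : ℕ} (p q : Fin (m + 1) → ℝ) : ℝ :=
  ∑ i, if p i = 0 then 0 else p i * Real.log (p i / q i)

/-- `Kinf(p, μ, f) = inf { KL(p,q) : q ∈ Δ_m, qf ≥ μ }`. -/
def Kinf {m : ℕ} (p : Fin (m + 1) → ℝ) (μ : ℝ) (f : Fin (m + 1) → ℝ) : ℝ :=
  sInf {x | ∃ q ∈ stdSimplex ℝ (Fin (m + 1)),
    (∀ i, q i = 0 → p i = 0) ∧ μ ≤ ∑ i, f i * q i ∧ x = klReal p q}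

/-- `Kinf*(p, μ, f) = inf { KL(p,q) : q ∈ Δ_m, qf = μ }`. -/
def Kinfstar {m : ℕ} (p : Fin (m + 1) → ℝ) (μ : ℝ) (f : Fin (m + 1) → ℝ) : ℝ :=
  sInf {x | ∃ q ∈ stdSimplex ℝ (Fin (m + 1)),
    (∀ i, q i = 0 → p i = 0) ∧ (∑ i, f i * q i) = μ ∧ x = klReal p q}

/-- `A(p, μ, f) = sgn(μ - pf) √(2 Kinf*(p, μ, f))`. -/
def Afun {m : ℕ} (p : Fin (m + 1) → ℝ) (μ : ℝ) (f : Fin (m + 1) → ℝ) : ℝ :=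
  Real.sign (μ - ∑ ℓ, f ℓ * p ℓ) * Real.sqrt (2 * Kinfstar p μ f)



/-- Unnormalized gamma density on the half line. -/
def gfun (a b t : ℝ) : ℝ≥0∞ := if 0 ≤ t then ENNReal.ofReal (t ^ (a - 1) * exp (-(b * t))) else 0

lemma gfun_meas (a b : ℝ) : Measurable (gfun a b) := by
  unfold gfun
  refine Measurable.ite measurableSet_Ici ?_ measurable_const
  fun_prop

lemma lint_gamma {a b : ℝ} (ha : 0 < a) (hb : 0 < b) :
    ∫⁻ t in Ioi (0 : ℝ), ENNReal.ofReal (t ^ (a - 1) * exp (-(b * t)))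
      = ENNReal.ofReal ((1 / b) ^ a * Gamma a) := by
  rw [← Real.integral_rpow_mul_exp_neg_mul_Ioi ha hb]
  refine (ofReal_integral_eq_lintegral_ofReal ?_ ?_).symm
  · have := integrableOn_rpow_mul_exp_neg_mul_rpow (p := 1) (s := a - 1) (b := b)
      (by linarith) one_pos hb
    simpa [neg_mul, IntegrableOn] using this
  · filter_upwards [ae_restrict_mem measurableSet_Ioi] with t ht
    have : (0 : ℝ) < t := ht
    positivity

lemma lint_gfun {a b : ℝ} (ha : 0 < a) (hb : 0 < b) :
    ∫⁻ t, gfun a b t = ENNReal.ofReal ((1 / b) ^ a * Gamma a) := by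
  rw [← lint_gamma ha hb, ← lintegral_indicator measurableSet_Ioi]
  refine lintegral_congr_ae ?_
  filter_upwards [Measure.ae_ne volume (0 : ℝ)] with t ht
  rcases lt_or_gt_of_ne ht with h | h
  · simp [gfun, not_le.mpr h, not_lt.mpr h.le]
  · simp [gfun, h.le, h]

lemma lint_pi (m : ℕ) (f : Fin m → ℝ → ℝ≥0∞) (hf : ∀ i, Measurable (f i)) :
    ∫⁻ y : Fin m → ℝ, ∏ i, f i (y i) = ∏ i, ∫⁻ t, f i t := by
  induction m with
  | zero => simp [volume_pi]
  | succ m ih =>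
    have h := (volume_preserving_piFinSuccAbove (fun _ : Fin (m + 1) => ℝ) 0).symm
    rw [h.lintegral_map_equiv (fun y : Fin (m + 1) → ℝ => ∏ i, f i (y i)), Measure.volume_eq_prod, lintegral_prod]
    · simp only [Fin.prod_univ_succ, MeasurableEquiv.piFinSuccAbove_symm_apply]
      simp only [Fin.insertNthEquiv_apply, Fin.insertNth_zero, Fin.cons_zero, Fin.cons_succ]
      have h2 : ∀ x, ∫⁻ y : Fin m → ℝ, f 0 x * ∏ i : Fin m, f i.succ (y i)
          = f 0 x * ∏ i : Fin m, ∫⁻ t, f i.succ t := by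
        intro x
        rw [lintegral_const_mul, ih _ (fun i => hf _)]
        exact Finset.measurable_fun_prod _ fun i _ => (hf _).comp (measurable_pi_apply i)
      refine (lintegral_congr h2).trans ?_
      rw [lintegral_mul_const _ (hf 0)]
    · apply Measurable.aemeasurable
      refine Measurable.comp (g := fun y : Fin (m+1) → ℝ => ∏ i, f i (y i)) ?_
        (MeasurableEquiv.measurable _)
      exact Finset.measurable_fun_prod _ fun i _ => (hf _).comp (measurable_pi_apply i)

lemma lint_scale (m : ℕ) (G : (Fin m → ℝ) → ℝ≥0∞) {s : ℝ} (hs : 0 < s) :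
    ∫⁻ y, G y = ENNReal.ofReal (s ^ m) * ∫⁻ x : Fin m → ℝ, G (s • x) := by
  have h := lintegral_map_equiv (μ := (volume : Measure (Fin m → ℝ))) G
    (MeasurableEquiv.smul₀ s hs.ne')
  have h2 := Measure.map_addHaar_smul (volume : Measure (Fin m → ℝ)) hs.ne'
  have h3 : (⇑(MeasurableEquiv.smul₀ s hs.ne') : (Fin m → ℝ) → (Fin m → ℝ)) = (s • ·) := rfl
  rw [h3, h2, lintegral_smul_measure] at h
  rw [← h, smul_eq_mul, ← mul_assoc, ← ENNReal.ofReal_mul (by positivity)]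
  have : s ^ m * |(s ^ Module.finrank ℝ (Fin m → ℝ))⁻¹| = 1 := by
    rw [abs_of_pos (by positivity)]
    simp [hs.ne']
  rw [this]; simp

lemma change_var (m : ℕ) (Φ : (Fin m → ℝ) → ℝ → ℝ≥0∞)
    (hΦ : Measurable (Function.uncurry Φ))
    (h0 : ∀ y t, (∑ i, y i) + t < 0 → Φ y t = 0) :
    ∫⁻ y, ∫⁻ t, Φ y t = ∫⁻ x : Fin m → ℝ, ∫⁻ s in Ioi (0 : ℝ),
      ENNReal.ofReal (s ^ m) * Φ (s • x) (s - ∑ i, s * x i) := by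
  have e1 : ∀ y : Fin m → ℝ, ∫⁻ t, Φ y t = ∫⁻ s, Φ y (s - ∑ i, y i) := fun y =>
    (lintegral_sub_right_eq_self (fun t => Φ y t) _).symm
  simp only [e1]
  have m1 : Measurable (Function.uncurry fun (y : Fin m → ℝ) (s : ℝ) => Φ y (s - ∑ i, y i)) := by
    refine hΦ.comp (g := Function.uncurry Φ) (f := fun p : (Fin m → ℝ) × ℝ => (p.1, p.2 - ∑ i, p.1 i)) ?_
    fun_prop
  rw [lintegral_lintegral_swap m1.aemeasurable]
  have e2 : ∫⁻ s, ∫⁻ y : Fin m → ℝ, Φ y (s - ∑ i, y i)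
      = ∫⁻ s in Ioi (0 : ℝ), ∫⁻ y : Fin m → ℝ, Φ y (s - ∑ i, y i) := by
    rw [← lintegral_indicator measurableSet_Ioi]
    refine lintegral_congr_ae ?_
    filter_upwards [Measure.ae_ne volume (0 : ℝ)] with t ht
    rcases lt_or_gt_of_ne ht with h | h
    · have : ∀ y : Fin m → ℝ, Φ y (t - ∑ i, y i) = 0 := fun y => h0 _ _ (by linarith)
      simp [this, not_lt.mpr h.le, Set.indicator]
    · simp [h]
  have m2 : Measurable (Function.uncurry fun (s : ℝ) (x : Fin m → ℝ) =>
      ENNReal.ofReal (s ^ m) * Φ (s • x) (s - ∑ i, s * x i)) := by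
    refine Measurable.mul (by fun_prop) ?_
    refine hΦ.comp (g := Function.uncurry Φ) (f := fun p : ℝ × (Fin m → ℝ) => (p.1 • p.2, p.1 - ∑ i, p.1 * p.2 i)) ?_
    fun_prop
  rw [e2, ← lintegral_lintegral_swap (μ := volume.restrict (Ioi (0:ℝ))) m2.aemeasurable]
  refine setLIntegral_congr_fun measurableSet_Ioi fun s hs => ?_
  rw [lint_scale m _ hs, lintegral_const_mul]
  · simp
  · refine hΦ.comp (g := Function.uncurry Φ) (f := fun x : (Fin m → ℝ) => (s • x, s - ∑ i, s * x i)) ?_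
    fun_prop

lemma gprod_eq (m : ℕ) (α b : Fin (m + 1) → ℝ) (x : Fin m → ℝ) {s : ℝ} (hs : 0 < s) :
    ENNReal.ofReal (s ^ m) * ((∏ i : Fin m, gfun (α i.castSucc) (b i.castSucc) ((s • x) i)) *
      gfun (α (Fin.last m)) (b (Fin.last m)) (s - ∑ i, s * x i))
    = ENNReal.ofReal (dirichletDensity m α x) * ENNReal.ofReal (s ^ ((∑ i, α i) - 1) *
        exp (-(((∑ i : Fin m, b i.castSucc * x i) + b (Fin.last m) * (1 - ∑ i, x i)) * s))) := by
  rw [← Finset.mul_sum]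
  by_cases hx : (∀ i, 0 ≤ x i) ∧ ∑ i, x i ≤ 1
  · obtain ⟨h1, h2⟩ := hx
    have h2' : 0 ≤ 1 - ∑ i, x i := by linarith
    have hd : dirichletDensity m α x = (∏ i : Fin m, x i ^ (α i.castSucc - 1)) *
        (1 - ∑ i, x i) ^ (α (Fin.last m) - 1) := by
      unfold dirichletDensity
      rw [Set.indicator_of_mem]
      exact ⟨h1, h2⟩
    have hp : ∀ i ∈ Finset.univ, (0:ℝ) ≤ x i ^ (α (Fin.castSucc i) - 1) :=
      fun i _ => rpow_nonneg (h1 i) _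
    have hl : s - s * ∑ i, x i = s * (1 - ∑ i, x i) := by ring
    have hdn : 0 ≤ dirichletDensity m α x := by
      rw [hd]; exact mul_nonneg (Finset.prod_nonneg hp) (rpow_nonneg h2' _)
    have e1 : ∀ i : Fin m, gfun (α i.castSucc) (b i.castSucc) ((s • x) i) = ENNReal.ofReal
        ((s ^ (α i.castSucc - 1) * x i ^ (α i.castSucc - 1)) * exp (-(b i.castSucc * (s * x i)))) := by
      intro i
      simp only [gfun, Pi.smul_apply, smul_eq_mul]
      rw [if_pos (mul_nonneg hs.le (h1 i)), mul_rpow hs.le (h1 i)]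
    have e2 : gfun (α (Fin.last m)) (b (Fin.last m)) (s - s * ∑ i, x i) = ENNReal.ofReal
        ((s ^ (α (Fin.last m) - 1) * (1 - ∑ i, x i) ^ (α (Fin.last m) - 1)) *
          exp (-(b (Fin.last m) * (s * (1 - ∑ i, x i))))) := by
      rw [hl, gfun, if_pos (mul_nonneg hs.le h2'), mul_rpow hs.le h2']
    simp only [e1, e2]
    rw [← ENNReal.ofReal_prod_of_nonneg, ← ENNReal.ofReal_mul, ← ENNReal.ofReal_mul (by positivity),
      ← ENNReal.ofReal_mul hdn]
    · congr 1
      rw [hd, Finset.prod_mul_distrib, Finset.prod_mul_distrib, ← Real.exp_sum,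
        ← Real.rpow_sum_of_pos hs, Fin.sum_univ_castSucc]
      have e3 : s ^ (∑ i : Fin m, α i.castSucc + α (Fin.last m) - 1)
          = s ^ m * s ^ (∑ i : Fin m, (α i.castSucc - 1)) * s ^ (α (Fin.last m) - 1) := by
        rw [← Real.rpow_natCast, ← Real.rpow_add hs, ← Real.rpow_add hs]
        congr 1
        simp
        ring
      have e4 : exp (-((∑ i : Fin m, b i.castSucc * x i + b (Fin.last m) * (1 - ∑ i, x i)) * s))
          = exp (∑ i : Fin m, -(b i.castSucc * (s * x i))) *
            exp (-(b (Fin.last m) * (s * (1 - ∑ i, x i)))) := by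
        rw [← Real.exp_add]
        congr 1
        rw [add_mul, Finset.sum_mul, neg_add, ← Finset.sum_neg_distrib]
        congr 1
        · exact Finset.sum_congr rfl fun i _ => by ring
        · ring
      rw [e3, e4]
      ring
    · exact Finset.prod_nonneg fun i hi => mul_nonneg (mul_nonneg (rpow_nonneg hs.le _) (hp i hi)) (exp_nonneg _)
    · intro i hi
      exact mul_nonneg (mul_nonneg (rpow_nonneg hs.le _) (hp i hi)) (exp_nonneg _)
  · have hd : dirichletDensity m α x = 0 := by
      unfold dirichletDensity
      rw [Set.indicator_of_notMem]
      exact hx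
    rw [hd, ENNReal.ofReal_zero, zero_mul]
    rw [not_and_or] at hx
    rcases hx with h | h
    · push Not at h
      obtain ⟨i, hi⟩ := h
      have : gfun (α i.castSucc) (b i.castSucc) ((s • x) i) = 0 := by
        rw [gfun, if_neg]
        simp only [Pi.smul_apply, smul_eq_mul, not_le]
        exact mul_neg_of_pos_of_neg hs hi
      rw [Finset.prod_eq_zero (Finset.mem_univ i) this]
      simp
    · have : gfun (α (Fin.last m)) (b (Fin.last m)) (s - s * ∑ i, x i) = 0 := by
        rw [gfun, if_neg]
        push Not at h ⊢
        nlinarith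
      rw [this]; simp

lemma gprod_meas (m : ℕ) (α b : Fin (m + 1) → ℝ) :
    Measurable (Function.uncurry fun (y : Fin m → ℝ) (t : ℝ) =>
      (∏ i : Fin m, gfun (α i.castSucc) (b i.castSucc) (y i)) *
        gfun (α (Fin.last m)) (b (Fin.last m)) t) := by
  refine Measurable.mul ?_ ((gfun_meas _ _).comp measurable_snd)
  exact Finset.measurable_fun_prod _ fun i _ => (gfun_meas _ _).comp (by fun_prop)

lemma dir_identity (m : ℕ) (α b : Fin (m + 1) → ℝ) (hα : ∀ i, 0 < α i) (hb : ∀ i, 0 < b i) :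
    ∫⁻ x : Fin m → ℝ, ENNReal.ofReal (dirichletDensity m α x) * ENNReal.ofReal
      ((1 / ((∑ i : Fin m, b i.castSucc * x i) + b (Fin.last m) * (1 - ∑ i, x i))) ^ (∑ i, α i)
        * Gamma (∑ i, α i))
    = ∏ i, ENNReal.ofReal ((1 / b i) ^ (α i) * Gamma (α i)) := by
  have h := change_var m (fun y t => (∏ i : Fin m, gfun (α i.castSucc) (b i.castSucc) (y i)) *
        gfun (α (Fin.last m)) (b (Fin.last m)) t) (gprod_meas m α b) ?_
  · have hA : 0 < ∑ i, α i := Finset.sum_pos (fun i _ => hα i) Finset.univ_nonempty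
    have l1 : ∫⁻ y : Fin m → ℝ, ∫⁻ t, (∏ i : Fin m, gfun (α i.castSucc) (b i.castSucc) (y i)) *
        gfun (α (Fin.last m)) (b (Fin.last m)) t
        = ∏ i, ENNReal.ofReal ((1 / b i) ^ (α i) * Gamma (α i)) := by
      have : ∀ y : Fin m → ℝ, ∫⁻ t, (∏ i : Fin m, gfun (α i.castSucc) (b i.castSucc) (y i)) *
        gfun (α (Fin.last m)) (b (Fin.last m)) t
        = (∏ i : Fin m, gfun (α i.castSucc) (b i.castSucc) (y i)) *
          ∫⁻ t, gfun (α (Fin.last m)) (b (Fin.last m)) t :=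
        fun y => lintegral_const_mul _ (gfun_meas _ _)
      simp only [this]
      have mp : Measurable fun y : Fin m → ℝ =>
          ∏ i : Fin m, gfun (α i.castSucc) (b i.castSucc) (y i) :=
        Finset.measurable_fun_prod _ fun i _ => (gfun_meas _ _).comp (measurable_pi_apply i)
      rw [lintegral_mul_const _ mp,
        lint_pi m (fun i => gfun (α i.castSucc) (b i.castSucc)) (fun i => gfun_meas _ _),
        Fin.prod_univ_castSucc, lint_gfun (hα _) (hb _)]
      congr 1
      exact Finset.prod_congr rfl fun i _ => lint_gfun (hα _) (hb _)
    rw [← l1, h]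
    refine lintegral_congr fun x => ?_
    rw [setLIntegral_congr_fun measurableSet_Ioi (fun s hs => gprod_eq m α b x hs),
      lintegral_const_mul _ (by fun_prop)]
    by_cases hx : (∀ i, 0 ≤ x i) ∧ ∑ i, x i ≤ 1
    · rw [lint_gamma hA]
      obtain ⟨h1, h2⟩ := hx
      rcases h2.lt_or_eq with h2 | h2
      · have : 0 ≤ ∑ i : Fin m, b i.castSucc * x i :=
          Finset.sum_nonneg fun i _ => mul_nonneg (hb _).le (h1 i)
        have : 0 < b (Fin.last m) * (1 - ∑ i, x i) := mul_pos (hb _) (by linarith)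
        linarith
      · rw [h2, sub_self, mul_zero, add_zero]
        have : ∃ i ∈ Finset.univ, 0 < x i := by
          apply Finset.exists_lt_of_sum_lt (f := fun _ => (0:ℝ))
          simp [h2]
        obtain ⟨i, hi, hxi⟩ := this
        exact Finset.sum_pos' (fun i _ => mul_nonneg (hb _).le (h1 i)) ⟨i, hi, mul_pos (hb _) hxi⟩
    · have hd : dirichletDensity m α x = 0 := by
        unfold dirichletDensity
        rw [Set.indicator_of_notMem]
        exact hx
      simp [hd]
  · intro y t ht
    by_cases h : ∃ i, y i < 0
    · obtain ⟨i, hi⟩ := h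
      rw [Finset.prod_eq_zero (Finset.mem_univ i), zero_mul]
      rw [gfun, if_neg (not_le.mpr hi)]
    · push Not at h
      have : 0 ≤ ∑ i, y i := Finset.sum_nonneg fun i _ => h i
      have : gfun (α (Fin.last m)) (b (Fin.last m)) t = 0 := by
        rw [gfun, if_neg]; linarith
      simp [this]

lemma dirDens_meas (m : ℕ) (α : Fin (m + 1) → ℝ) : Measurable (dirichletDensity m α) := by
  unfold dirichletDensity
  refine Measurable.indicator (by fun_prop) ?_
  have h1 : MeasurableSet (⋂ i, {x : Fin m → ℝ | 0 ≤ x i}) :=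
    MeasurableSet.iInter fun i => measurableSet_le measurable_const (measurable_pi_apply i)
  have h2 : MeasurableSet {x : Fin m → ℝ | ∑ i, x i ≤ 1} :=
    measurableSet_le (by fun_prop) measurable_const
  have h3 : {x : Fin m → ℝ | (∀ i, 0 ≤ x i) ∧ ∑ i, x i ≤ 1}
      = (⋂ i, {x : Fin m → ℝ | 0 ≤ x i}) ∩ {x : Fin m → ℝ | ∑ i, x i ≤ 1} := by
    ext; simp
  rw [h3]
  exact h1.inter h2

/-- Chernoff bound for Dirichlet vectors. -/
lemma dir_chernoff (m : ℕ) (α b : Fin (m + 1) → ℝ) (hα : ∀ i, 0 < α i) (hb : ∀ i, 0 < b i)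
    (S : Set (Fin (m + 1) → ℝ)) (hSm : MeasurableSet S)
    (hS : ∀ w ∈ S, (∀ i, 0 ≤ w i) → ∑ i, w i = 1 → ∑ i, b i * w i ≤ 1) :
    dirichlet m α S ≤ ENNReal.ofReal (∏ i, (1 / b i) ^ (α i)) := by
  have hA : 0 < ∑ i, α i := Finset.sum_pos (fun i _ => hα i) Finset.univ_nonempty
  have hG : 0 < Gamma (∑ i, α i) := Gamma_pos_of_pos hA
  have mm : Measurable (fun x : Fin m → ℝ => (Fin.snoc x (1 - ∑ i, x i) : Fin (m + 1) → ℝ)) := by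
    refine measurable_pi_lambda _ fun i => ?_
    refine Fin.lastCases ?_ (fun j => ?_) i
    · simp only [Fin.snoc_last]; fun_prop
    · simp only [Fin.snoc_castSucc]; fun_prop
  set P : ℝ≥0∞ := ∏ i, ENNReal.ofReal (Gamma (α i)) with hP
  have hPpos : P ≠ 0 := Finset.prod_ne_zero_iff.mpr fun i _ => by
    simpa using Gamma_pos_of_pos (hα i)
  have hPtop : P ≠ ⊤ := ENNReal.prod_ne_top fun i _ => ENNReal.ofReal_ne_top
  have hZ : dirichletBase m α Set.univ * ENNReal.ofReal (Gamma (∑ i, α i)) = P := by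
    have h := dir_identity m α (fun _ => 1) hα (fun _ => one_pos)
    simp only [one_mul, add_sub_cancel, div_one, one_rpow] at h
    rw [lintegral_mul_const _ (dirDens_meas m α).ennreal_ofReal] at h
    rw [dirichletBase, withDensity_apply _ MeasurableSet.univ, Measure.restrict_univ]
    exact h
  have hJ := dir_identity m α b hα hb
  have hR : ∏ i, ENNReal.ofReal ((1 / b i) ^ (α i) * Gamma (α i))
      = ENNReal.ofReal (∏ i, (1 / b i) ^ (α i)) * P := by
    rw [ENNReal.ofReal_prod_of_nonneg (fun i _ => rpow_nonneg (by have := hb i; positivity) _), hP,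
      ← Finset.prod_mul_distrib]
    exact Finset.prod_congr rfl fun i _ =>
      ENNReal.ofReal_mul (rpow_nonneg (by have := hb i; positivity) _)
  have hGe : ENNReal.ofReal (Gamma (∑ i, α i)) ≠ 0 := by simpa using hG
  have hZ0 : dirichletBase m α Set.univ ≠ 0 := by
    intro h; rw [h, zero_mul] at hZ; exact hPpos hZ.symm
  have hZt : dirichletBase m α Set.univ ≠ ⊤ := by
    intro h; rw [h, ENNReal.top_mul hGe] at hZ; exact hPtop hZ.symm
  rw [dirichlet, Measure.map_apply mm hSm, Measure.smul_apply, smul_eq_mul]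
  rw [ENNReal.inv_mul_le_iff hZ0 hZt]
  rw [← ENNReal.mul_le_mul_iff_left hGe ENNReal.ofReal_ne_top]
  rw [mul_right_comm, hZ, mul_comm P, ← hR, ← hJ, dirichletBase,
    withDensity_apply _ (mm hSm), ← lintegral_mul_const _ (dirDens_meas m α).ennreal_ofReal,
    ← lintegral_indicator (mm hSm)]
  refine lintegral_mono fun x => ?_
  by_cases hxS : x ∈ (fun x : Fin m → ℝ => (Fin.snoc x (1 - ∑ i, x i) : Fin (m + 1) → ℝ)) ⁻¹' S
  swap
  · rw [Set.indicator_of_notMem hxS]; exact zero_le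
  rw [Set.indicator_of_mem hxS]
  by_cases hx : (∀ i, 0 ≤ x i) ∧ ∑ i, x i ≤ 1
  swap
  · have hd : dirichletDensity m α x = 0 := by
      unfold dirichletDensity
      rw [Set.indicator_of_notMem]
      exact hx
    simp [hd]
  gcongr
  obtain ⟨h1, h2⟩ := hx
  have hw0 : ∀ i, 0 ≤ (Fin.snoc x (1 - ∑ i, x i) : Fin (m + 1) → ℝ) i := by
    intro i
    refine Fin.lastCases ?_ (fun j => ?_) i
    · simp only [Fin.snoc_last]; linarith
    · simp only [Fin.snoc_castSucc]; exact h1 j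
  have hw1 : ∑ i, (Fin.snoc x (1 - ∑ i, x i) : Fin (m + 1) → ℝ) i = 1 := by
    rw [Fin.sum_univ_castSucc]; simp
  have hc := hS _ hxS hw0 hw1
  have hcpos : 0 < ∑ i, b i * (Fin.snoc x (1 - ∑ i, x i) : Fin (m + 1) → ℝ) i := by
    have : ∃ i ∈ Finset.univ, 0 < (Fin.snoc x (1 - ∑ i, x i) : Fin (m + 1) → ℝ) i := by
      apply Finset.exists_lt_of_sum_lt (f := fun _ => (0:ℝ))
      rw [hw1]; simp
    obtain ⟨i, hi, hxi⟩ := this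
    exact Finset.sum_pos' (fun i _ => mul_nonneg (hb _).le (hw0 i)) ⟨i, hi, mul_pos (hb _) hxi⟩
  rw [Fin.sum_univ_castSucc] at hc hcpos
  simp only [Fin.snoc_last, Fin.snoc_castSucc] at hc hcpos
  have : (1:ℝ) ≤ (1 / ((∑ i : Fin m, b i.castSucc * x i) + b (Fin.last m) * (1 - ∑ i, x i))) ^ (∑ i, α i) :=
    one_le_rpow (by rw [le_div_iff₀ hcpos]; linarith) hA.le
  nlinarith

lemma log_lower {x : ℝ} (hx : x ≤ 1 / 2) : -x - x ^ 2 ≤ Real.log (1 - x) := by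
  rcases le_total x 0 with h | h
  · have h1 := Real.le_log_one_add_of_nonneg (x := -x) (by linarith)
    have h2 : 1 + -x = 1 - x := by ring
    rw [h2] at h1
    refine le_trans ?_ h1
    rw [le_div_iff₀ (by linarith)]
    nlinarith [mul_nonneg (sq_nonneg x) (neg_nonneg.mpr h), sq_nonneg x]
  · have h1 := Real.abs_log_sub_add_sum_range_le (x := x) (by rw [abs_of_nonneg h]; linarith) 4
    rw [abs_of_nonneg h] at h1
    have h2 := (abs_le.mp h1).1
    have h3 : x ^ (4 + 1) / (1 - x) ≤ 2 * x ^ 5 := by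
      rw [div_le_iff₀ (by linarith)]
      have : 0 ≤ x ^ 5 := by positivity
      norm_num
      nlinarith
    simp only [Finset.sum_range_succ, Finset.sum_range_zero] at h2
    norm_num at h2 h3
    have h4 : x ^ 3 ≤ x ^ 2 * (1 / 2) := by
      rw [pow_succ x 2]; gcongr
    have h5 : x ^ 4 ≤ x ^ 3 * (1 / 2) := by
      rw [pow_succ x 3]; gcongr
    have h6 : x ^ 5 ≤ x ^ 4 * (1 / 2) := by
      rw [pow_succ x 4]; gcongr
    linarith [sq_nonneg x]

/-- The scalar optimisation step. -/
lemma bern_scalar {N V L γ d a : ℝ} (hN : 0 < N) (hV : 0 ≤ V) (hL : 0 < L) (hγ : 0 ≤ γ)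
    (ha : a = √(4 * V * L / N)) (hd : d = a + (4 * L + 5 * γ) / N) (hd1 : d ≤ 1) :
    ∃ l : ℝ, 0 < l ∧ l ≤ 1 / 2 ∧ L ≤ l * (N * d - γ) - l ^ 2 * (N * V + N * d ^ 2 + γ) := by
  have ha0 : 0 ≤ a := ha ▸ sqrt_nonneg _
  have hNd : N * d = N * a + (4 * L + 5 * γ) := by rw [hd]; field_simp
  have ha2 : N * a ^ 2 = 4 * V * L := by
    rw [ha, sq_sqrt (by positivity)]; field_simp
  have hd0 : 0 ≤ d := by rw [hd]; positivity
  by_cases hc : N * V < 4 * L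
  · refine ⟨1 / 2, by norm_num, le_refl _, ?_⟩
    have h1 : N * V ≤ N * a := by
      have : V ^ 2 ≤ a ^ 2 := by
        have : N * V ^ 2 ≤ N * a ^ 2 := by nlinarith
        exact le_of_mul_le_mul_left this hN
      have := (pow_le_pow_iff_left₀ hV ha0 two_ne_zero).mp this
      gcongr
    have h2 : N * d ^ 2 ≤ N * d := by nlinarith [mul_nonneg hN.le hd0]
    nlinarith
  · push Not at hc
    have hV0 : 0 < V := by
      by_contra h
      have : V = 0 := le_antisymm (not_lt.mp h) hV
      rw [this] at hc; linarith
    set l := √(L / (N * V)) with hl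
    have hl0 : 0 < l := sqrt_pos.mpr (by positivity)
    have hl2 : l ^ 2 * (N * V) = L := by
      rw [hl, sq_sqrt (by positivity)]; field_simp
    have hlh : l ≤ 1 / 2 := by
      rw [hl]
      apply Real.sqrt_le_iff.mpr ⟨by norm_num, _⟩
      rw [div_le_iff₀ (by positivity)]; linarith
    have hla : l * (N * a) = 2 * L := by
      have : (l * (N * a)) ^ 2 = (2 * L) ^ 2 := by
        have : (l * (N * a)) ^ 2 = (l ^ 2 * N) * (N * a ^ 2) := by ring
        rw [this, ha2]
        linear_combination (4 * L) * hl2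
      exact (pow_left_inj₀ (by positivity) (by positivity) two_ne_zero).mp this
    refine ⟨l, hl0, hlh, ?_⟩
    have hlNd : l * (N * d) = 2 * L + l * (4 * L + 5 * γ) := by rw [hNd, mul_add, hla]
    have h1 : l ^ 2 * (N * d ^ 2) ≤ l * (2 * L + l * (4 * L + 5 * γ)) := by
      have : l ^ 2 * (N * d ^ 2) = (l * (2 * L + l * (4 * L + 5 * γ))) * d := by
        rw [← hlNd]; ring
      rw [this]
      exact mul_le_of_le_one_right (by positivity) hd1
    have h2 : l * l ≤ l * (1 / 2) := by gcongr
    have h3 : l * l * L ≤ l * (1 / 2) * L := by gcongr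
    have h4 : l * l * γ ≤ l * (1 / 2) * γ := by gcongr
    nlinarith

/-- **Bernstein-type inequality for the Dirichlet process posterior mean**
(conditional form, via Bayesian bootstrap weights `w ∼ Dir(γ, 1, …, 1, γ)`). -/
theorem dirichlet_process_bernstein
    (n : ℕ) (hn : 1 ≤ n) (ε γ : ℝ) (hε : ε ∈ Set.Ioo (0 : ℝ) 1)
    (hγ : c0 / ε ^ 2 + 1 ≤ γ)
    (g : Fin (n + 2) → ℝ) (hg : ∀ i, g i ∈ Set.Icc (0 : ℝ) 1)
    (hg0 : g 0 = 0) (hgl : g (Fin.last (n + 1)) = 1)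
    (δ : ℝ) (hδ : δ ∈ Set.Ioo (0 : ℝ) 1) :
    dirichlet (n + 1) (fun i => if i = 0 then γ else if i = Fin.last (n + 1) then γ else 1)
        {w | Real.sqrt (4 * ((1 / n) * (∑ i : Fin n, g i.castSucc.succ ^ 2)
                  - ((1 / n) * ∑ i : Fin n, g i.castSucc.succ) ^ 2)
                * Real.log ((1 + ε) / δ) / (n + 2 * γ - 1))
              + (4 * Real.log ((1 + ε) / δ) + 5 * γ) / (n + 2 * γ - 1)
              ≤ (∑ i, w i * g i) - (1 / n) * ∑ i : Fin n, g i.castSucc.succ}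
      ≤ ENNReal.ofReal δ := by
  obtain ⟨hε0, hε1⟩ := hε
  obtain ⟨hδ0, hδ1⟩ := hδ
  have hγ1 : 1 ≤ γ := by
    have : 0 ≤ c0 / ε ^ 2 := by unfold c0; positivity
    linarith
  have hn' : (1 : ℝ) ≤ n := by exact_mod_cast hn
  set α : Fin (n + 2) → ℝ := fun i => if i = 0 then γ else if i = Fin.last (n + 1) then γ else 1
    with hαdef
  have hα1 : ∀ i, 1 ≤ α i := by
    intro i
    simp only [hαdef]
    split_ifs <;> linarith
  have hα : ∀ i, 0 < α i := fun i => lt_of_lt_of_le one_pos (hα1 i)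
  set L := Real.log ((1 + ε) / δ) with hLdef
  set G : ℝ := (1 / n) * ∑ i : Fin n, g i.castSucc.succ with hG
  set V : ℝ := (1 / n) * (∑ i : Fin n, g i.castSucc.succ ^ 2) - G ^ 2 with hV
  set N : ℝ := n + 2 * γ - 1 with hN
  set d : ℝ := √(4 * V * L / N) + (4 * L + 5 * γ) / N with hd
  have hSm : MeasurableSet {w : Fin (n + 2) → ℝ | d ≤ (∑ i, w i * g i) - G} :=
    measurableSet_le measurable_const (by fun_prop)
  have hL : 0 < L := Real.log_pos (by rw [lt_div_iff₀ hδ0]; linarith)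
  have hexp : exp (-L) ≤ δ := by
    rw [hLdef, Real.exp_neg, Real.exp_log (by positivity), inv_div,
      div_le_iff₀ (by linarith)]
    nlinarith
  have hN0 : 0 < N := by rw [hN]; linarith
  have hG0 : 0 ≤ G := mul_nonneg (by positivity) (Finset.sum_nonneg fun i _ => (hg _).1)
  have hsG : ∑ i : Fin n, g i.castSucc.succ = n * G := by rw [hG]; field_simp
  have hsV : ∑ i : Fin n, g i.castSucc.succ ^ 2 = n * (V + G ^ 2) := by
    rw [hV]; field_simp; ring
  have hsq : ∀ μ : ℝ, ∑ i : Fin n, (g i.castSucc.succ - μ) ^ 2 = n * V + n * (μ - G) ^ 2 := by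
    intro μ
    have : ∀ i : Fin n, (g i.castSucc.succ - μ) ^ 2
        = g i.castSucc.succ ^ 2 - 2 * μ * g i.castSucc.succ + μ ^ 2 := fun i => by ring
    simp only [this, Finset.sum_add_distrib, Finset.sum_sub_distrib, ← Finset.mul_sum, hsG, hsV]
    simp
    ring
  have hV0 : 0 ≤ V := by
    have h1 := hsq G
    have h2 : 0 ≤ ∑ i : Fin n, (g i.castSucc.succ - G) ^ 2 :=
      Finset.sum_nonneg fun i _ => sq_nonneg _
    have h3 : 0 ≤ n * V := by rw [h1] at h2; simpa using h2
    exact nonneg_of_mul_nonneg_right h3 (by linarith)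
  have hd0 : 0 ≤ d := by rw [hd]; positivity
  by_cases hμ : 1 < G + d
  · -- the event is empty on the simplex
    refine (dir_chernoff (n + 1) α (fun _ => 1 / δ) hα (fun _ => by positivity) _ hSm ?_).trans ?_
    · intro w hw hw0 hw1
      exfalso
      have h1 : ∑ i, w i * g i ≤ ∑ i, w i :=
        Finset.sum_le_sum fun i _ => mul_le_of_le_one_right (hw0 i) (hg i).2
      have h2 : d ≤ (∑ i, w i * g i) - G := hw
      linarith
    · apply ENNReal.ofReal_le_ofReal
      simp only [one_div_one_div]
      rw [← Real.rpow_sum_of_pos hδ0]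
      have : 1 ≤ ∑ i, α i :=
        (hα1 0).trans (Finset.single_le_sum (fun i _ => (hα i).le) (Finset.mem_univ 0))
      calc δ ^ (∑ i, α i) ≤ δ ^ (1 : ℝ) := rpow_le_rpow_of_exponent_ge hδ0 hδ1.le this
        _ = δ := rpow_one δ
  push Not at hμ
  obtain ⟨l, hl0, hl, hlL⟩ := bern_scalar (d := d) hN0 hV0 hL (by linarith : 0 ≤ γ) rfl hd
    (by linarith)
  set μ : ℝ := G + d with hμd
  have hμ0 : 0 ≤ μ := by linarith
  have hx : ∀ i, l * (g i - μ) ≤ 1 / 2 := by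
    intro i
    have h1 : g i - μ ≤ 1 := by linarith [(hg i).2]
    nlinarith
  have hb : ∀ i, 0 < 1 - l * (g i - μ) := fun i => by linarith [hx i]
  refine (dir_chernoff (n + 1) α (fun i => 1 - l * (g i - μ)) hα hb _ hSm ?_).trans ?_
  · intro w hw hw0 hw1
    have h2 : d ≤ (∑ i, w i * g i) - G := hw
    have : ∀ i, (1 - l * (g i - μ)) * w i = (1 + l * μ) * w i - l * (w i * g i) :=
      fun i => by ring
    simp only [this, Finset.sum_sub_distrib, ← Finset.mul_sum, hw1]
    nlinarith
  · apply ENNReal.ofReal_le_ofReal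
    refine le_trans ?_ hexp
    have h1 : ∀ i, (1 / (1 - l * (g i - μ))) ^ α i
        = exp (-(α i * Real.log (1 - l * (g i - μ)))) := by
      intro i
      rw [Real.rpow_def_of_pos (by have := hb i; positivity), one_div, Real.log_inv]
      congr 1; ring
    simp only [h1]
    rw [← Real.exp_sum, Real.exp_le_exp, Finset.sum_neg_distrib, neg_le_neg_iff]
    refine hlL.trans ?_
    have h2 : ∑ i, α i * (-(l * (g i - μ)) - (l * (g i - μ)) ^ 2)
        ≤ ∑ i, α i * Real.log (1 - l * (g i - μ)) :=
      Finset.sum_le_sum fun i _ => mul_le_mul_of_nonneg_left (log_lower (hx i)) (hα i).le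
    refine le_trans ?_ h2
    rw [Fin.sum_univ_succ, Fin.sum_univ_castSucc, Fin.succ_last, hg0, hgl]
    have a0 : α 0 = γ := by simp [hαdef]
    have al : α (Fin.last (n + 1)) = γ := by simp [hαdef]
    have am : ∀ i : Fin n, α i.castSucc.succ = 1 := by
      intro i
      have e1 : i.castSucc.succ ≠ 0 := Fin.succ_ne_zero _
      have e2 : i.castSucc.succ ≠ Fin.last (n + 1) := by
        rw [← Fin.succ_last, Ne, Fin.succ_inj]
        exact (Fin.castSucc_lt_last i).ne
      simp only [hαdef, if_neg e1, if_neg e2]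
    rw [a0, al]
    have h3 : ∑ i : Fin n, α i.castSucc.succ * (-(l * (g i.castSucc.succ - μ))
        - (l * (g i.castSucc.succ - μ)) ^ 2) = l * (n * d) - l ^ 2 * (n * V + n * d ^ 2) := by
      have : ∀ i : Fin n, α i.castSucc.succ * (-(l * (g i.castSucc.succ - μ))
        - (l * (g i.castSucc.succ - μ)) ^ 2)
          = l * μ - l * g i.castSucc.succ - l ^ 2 * (g i.castSucc.succ - μ) ^ 2 := by
        intro i; rw [am]; ring
      simp only [this, Finset.sum_sub_distrib, ← Finset.mul_sum, hsG, hsq]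
      simp
      rw [hμd]
      ring
    rw [h3]
    have k1 : 0 ≤ l * (γ * (μ - d)) := by
      have : 0 ≤ μ - d := by linarith
      positivity
    have k2 : 0 ≤ l * d := by positivity
    have k3 : 0 ≤ l ^ 2 * ((2 * γ - 1) * (V + d ^ 2)) := by
      have : 0 ≤ 2 * γ - 1 := by linarith
      positivity
    have k4 : 0 ≤ l ^ 2 * (γ * (μ * (1 - μ))) := by
      have : 0 ≤ 1 - μ := by linarith
      positivity
    rw [hN]
    clear_value μ d V G L
    linarith

end
end

section
/- Stability of Kinf under a shift of the underlying distribution: Let m ≥ 1, b > 0, and let f : {0,…,m} → [0,b] satisfy f(0) = 0 and f(m) = b. Let α, β ∈ ℝ_{≥0}^{m+1} with β_m + α_m ≥ 1, and set ᾱ = Σ_{i=0}^m α_i > 0 and β̄ = Σ_{i=0}^m β_i. For a nonzero vector s ∈ ℝ_{≥0}^{m+1}, write p̄_s(i) = s_i / (Σ_{j=0}^m s_j). Then for every μ ∈ (0, b): Kinf(p̄_α, μ, f) − (3β̄/ᾱ)·log( b(ᾱ + β̄)/(b − μ) ) ≤ Kinf(p̄_{α+β}, μ, f) ≤ ( ᾱ·Kinf(p̄_α,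 μ, f) + β̄·log( b/(b − μ) ) ) / (ᾱ + β̄). -/
open Real Set

noncomputable section

lemma kl_key {a y c : ℝ} (ha : 0 ≤ a) (hy : 0 ≤ y) (h : y = 0 → a = 0) (hc : 0 < c) :
    a * Real.log c + a - c * y ≤ a * Real.log (a / y) := by
  rcases eq_or_lt_of_le ha with h0 | h0
  · subst h0
    have := mul_nonneg hc.le hy
    simp; exact this
  · have hy0 : 0 < y := lt_of_le_of_ne hy (fun hh => h0.ne' (h hh.symm))
    have h1 := Real.log_le_sub_one_of_pos (show 0 < c * y / a by positivity)
    have h2 : Real.log (c * y / a) = Real.log c - Real.log (a / y) := by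
      rw [Real.log_div (by positivity) (by positivity), Real.log_mul (by positivity) (by positivity),
        Real.log_div (by positivity) (by positivity)]; ring
    rw [h2] at h1
    have h3 := mul_le_mul_of_nonneg_left h1 h0.le
    have h4 : a * (c * y / a - 1) = c * y - a := by field_simp
    rw [h4] at h3
    linarith

lemma log_sum_two {a y a' y' : ℝ} (ha : 0 ≤ a) (hy : 0 ≤ y) (h : y = 0 → a = 0)
    (ha' : 0 ≤ a') (hy' : 0 ≤ y') (h' : y' = 0 → a' = 0) :
    (a + a') * Real.log ((a + a') / (y + y')) ≤
      a * Real.log (a / y) + a' * Real.log (a' / y') := by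
  rcases eq_or_lt_of_le (add_nonneg ha ha') with h0 | h0
  · have h1 : a = 0 := by linarith
    have h2 : a' = 0 := by linarith
    simp [h1, h2]
  · have hyy : 0 < y + y' := by
      rcases eq_or_lt_of_le (add_nonneg hy hy') with h1 | h1
      · have := h (by linarith)
        have := h' (by linarith)
        linarith
      · exact h1
    have hc : 0 < (a + a') / (y + y') := by positivity
    have k1 := kl_key ha hy h hc
    have k2 := kl_key ha' hy' h' hc
    have e : (a + a') / (y + y') * (y + y') = a + a' := by field_simp
    nlinarith

lemma klReal_eq {m : ℕ} (p q : Fin (m + 1) → ℝ) :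
    klReal p q = ∑ i, p i * Real.log (p i / q i) := by
  unfold klReal
  refine Finset.sum_congr rfl fun i _ => ?_
  split_ifs with h
  · simp [h]
  · rfl

lemma klReal_nonneg {m : ℕ} {p q : Fin (m + 1) → ℝ} (hp : p ∈ stdSimplex ℝ (Fin (m + 1)))
    (hq : q ∈ stdSimplex ℝ (Fin (m + 1))) (h : ∀ i, q i = 0 → p i = 0) : 0 ≤ klReal p q := by
  rw [klReal_eq]
  have : ∑ i, (p i - q i) ≤ ∑ i, p i * Real.log (p i / q i) := by
    refine Finset.sum_le_sum fun i _ => ?_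
    have := kl_key (hp.1 i) (hq.1 i) (h i) one_pos
    simpa using this
  rw [Finset.sum_sub_distrib, hp.2, hq.2] at this
  linarith

lemma Kinf_le {m : ℕ} {p q f : Fin (m + 1) → ℝ} {μ : ℝ} (hp : p ∈ stdSimplex ℝ (Fin (m + 1)))
    (hq : q ∈ stdSimplex ℝ (Fin (m + 1))) (h : ∀ i, q i = 0 → p i = 0)
    (hμ : μ ≤ ∑ i, f i * q i) : Kinf p μ f ≤ klReal p q := by
  refine csInf_le ⟨0, ?_⟩ ⟨q, hq, h, hμ, rfl⟩
  rintro x ⟨q, hq, h, -, rfl⟩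
  exact klReal_nonneg hp hq h

/-- the candidate `(1-x) p + x δ_m` -/
lemma mix_mem {m : ℕ} {p : Fin (m + 1) → ℝ} {x : ℝ} (hp : p ∈ stdSimplex ℝ (Fin (m + 1)))
    (hx0 : 0 ≤ x) (hx1 : x ≤ 1) :
    (fun i => (1 - x) * p i + x * (if i = Fin.last m then 1 else 0)) ∈
      stdSimplex ℝ (Fin (m + 1)) := by
  refine ⟨fun i => ?_, ?_⟩
  · have := hp.1 i
    have h1 : 0 ≤ 1 - x := by linarith
    dsimp only
    split_ifs <;> positivity
  · rw [Finset.sum_add_distrib, ← Finset.mul_sum, ← Finset.mul_sum, hp.2]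
    simp

lemma mix_mean {m : ℕ} {p f : Fin (m + 1) → ℝ} {x b : ℝ} (hp : p ∈ stdSimplex ℝ (Fin (m + 1)))
    (hf : ∀ i, 0 ≤ f i) (hfm : f (Fin.last m) = b) (hx1 : x ≤ 1) :
    x * b ≤ ∑ i, f i * ((1 - x) * p i + x * (if i = Fin.last m then 1 else 0)) := by
  have : ∑ i, f i * ((1 - x) * p i + x * (if i = Fin.last m then 1 else 0)) =
      ∑ i, (1 - x) * (f i * p i) + x * b := by
    simp_rw [mul_add, Finset.sum_add_distrib]
    congr 1
    · refine Finset.sum_congr rfl fun i _ => by ring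
    · simp [hfm, mul_comm]
  rw [this]
  have : 0 ≤ ∑ i, (1 - x) * (f i * p i) :=
    Finset.sum_nonneg fun i _ => mul_nonneg (by linarith) (mul_nonneg (hf i) (hp.1 i))
  linarith

lemma mix_supp {m : ℕ} {p : Fin (m + 1) → ℝ} {x : ℝ} (hp : p ∈ stdSimplex ℝ (Fin (m + 1)))
    (hx0 : 0 ≤ x) (hx1 : x < 1) (i : Fin (m + 1))
    (h : (1 - x) * p i + x * (if i = Fin.last m then 1 else 0) = 0) : p i = 0 := by
  by_contra hne
  have h1 : 0 < p i := lt_of_le_of_ne (hp.1 i) (Ne.symm hne)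
  have h2 : 0 < (1 - x) * p i := mul_pos (by linarith) h1
  have h3 : 0 ≤ x * (if i = Fin.last m then (1 : ℝ) else 0) := by split_ifs <;> simpa using hx0
  linarith

lemma log_ratio {x b μ : ℝ} (hb : 0 < b) (hμb : μ < b) (hx : x = μ / b) :
    b / (b - μ) = 1 / (1 - x) := by
  subst hx
  have : b - μ ≠ 0 := by linarith
  have : 1 - μ / b ≠ 0 := by
    intro h
    field_simp at h
    exact this (by simpa using h)
  field_simp

lemma Kinf_upper {m : ℕ} {f pa pb : Fin (m + 1) → ℝ} {b μ w : ℝ} (hb : 0 < b)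
    (hf : ∀ i, 0 ≤ f i) (hfm : f (Fin.last m) = b) (hμ0 : 0 < μ) (hμb : μ < b)
    (hpa : pa ∈ stdSimplex ℝ (Fin (m + 1))) (hpb : pb ∈ stdSimplex ℝ (Fin (m + 1)))
    (hw0 : 0 < w) (hw1 : w < 1) {q : Fin (m + 1) → ℝ} (hq : q ∈ stdSimplex ℝ (Fin (m + 1)))
    (h : ∀ i, q i = 0 → pa i = 0) (hqμ : μ ≤ ∑ i, f i * q i) :
    Kinf (fun i => w * pa i + (1 - w) * pb i) μ f ≤
      w * klReal pa q + (1 - w) * Real.log (b / (b - μ)) := by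
  obtain ⟨x, hx⟩ : ∃ x, x = μ / b := ⟨_, rfl⟩
  have hx0 : 0 < x := hx ▸ div_pos hμ0 hb
  have hx1 : x < 1 := by rw [hx, div_lt_one hb]; exact hμb
  have hxb : x * b = μ := by rw [hx]; field_simp
  have hr := mix_mem hpb hx0.le hx1.le
  have hrm := mix_mean hpb hf hfm hx1.le
  have hrs := mix_supp hpb hx0.le hx1
  have hrl : ∀ i, (1 - x) * pb i ≤
      (fun i => (1 - x) * pb i + x * (if i = Fin.last m then 1 else 0)) i := fun i => by
    dsimp only
    split_ifs <;> linarith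
  rw [log_ratio hb hμb hx]
  rw [hxb] at hrm
  generalize hrdef : (fun i => (1 - x) * pb i + x * (if i = Fin.last m then (1:ℝ) else 0)) = r at *
  have hrd : ∀ i, (1 - x) * pb i + x * (if i = Fin.last m then (1:ℝ) else 0) = r i :=
    fun i => by rw [← hrdef]
  simp only [hrd] at hrm hrs
  have hw' : 0 < 1 - w := by linarith
  refine (Kinf_le (q := fun i => w * q i + (1 - w) * r i) ?_ ?_ ?_ ?_).trans ?_
  · refine ⟨fun i => ?_, ?_⟩
    · have := hpa.1 i
      have := hpb.1 i
      positivity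
    · rw [Finset.sum_add_distrib, ← Finset.mul_sum, ← Finset.mul_sum, hpa.2, hpb.2]; ring
  · refine ⟨fun i => ?_, ?_⟩
    · have := hq.1 i
      have := hr.1 i
      positivity
    · rw [Finset.sum_add_distrib, ← Finset.mul_sum, ← Finset.mul_sum, hq.2, hr.2]; ring
  · intro i hi
    have h1 := mul_nonneg hw0.le (hq.1 i)
    have h2 := mul_nonneg hw'.le (hr.1 i)
    have h3 : q i = 0 := by
      have : w * q i = 0 := by linarith
      simpa [hw0.ne'] using this
    have h4 : r i = 0 := by
      have : (1 - w) * r i = 0 := by linarith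
      simpa [hw'.ne'] using this
    rw [h i h3, hrs i h4]; ring
  · have : ∑ i, f i * (w * q i + (1 - w) * r i) =
        w * ∑ i, f i * q i + (1 - w) * ∑ i, f i * r i := by
      rw [Finset.mul_sum, Finset.mul_sum, ← Finset.sum_add_distrib]
      exact Finset.sum_congr rfl fun i _ => by ring
    rw [this]
    nlinarith
  · rw [klReal_eq, klReal_eq, Finset.mul_sum]
    have e : (1 - w) * Real.log (1 / (1 - x)) =
        ∑ i, (1 - w) * pb i * Real.log (1 / (1 - x)) := by
      rw [← Finset.sum_mul, ← Finset.mul_sum, hpb.2, mul_one]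
    rw [e, ← Finset.sum_add_distrib]
    refine Finset.sum_le_sum fun i _ => ?_
    have hx' : 0 < 1 - x := by linarith
    have a1 := hpa.1 i
    have a2 := hpb.1 i
    have a3 := hq.1 i
    have a4 := hr.1 i
    have ls := log_sum_two (a := w * pa i) (y := w * q i) (a' := (1 - w) * pb i)
      (y' := (1 - w) * ((1 - x) * pb i)) (by positivity) (by positivity)
      (fun hh => by
        have : q i = 0 := by simpa [hw0.ne'] using hh
        rw [h i this]; ring)
      (by positivity) (by positivity)
      (fun hh => by
        have : pb i = 0 := by simpa [hw'.ne', hx'.ne'] using hh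
        rw [this]; ring)
    have e1 : w * pa i / (w * q i) = pa i / q i := mul_div_mul_left _ _ hw0.ne'
    have e2 : (1 - w) * pb i * Real.log ((1 - w) * pb i / ((1 - w) * ((1 - x) * pb i))) =
        (1 - w) * pb i * Real.log (1 / (1 - x)) := by
      rcases eq_or_ne (pb i) 0 with h0 | h0
      · simp [h0]
      · congr 2
        field_simp
    rw [e1, e2, mul_assoc w] at ls
    refine le_trans ?_ ls
    rcases eq_or_lt_of_le (show 0 ≤ w * pa i + (1 - w) * pb i by positivity) with h0 | h0
    · rw [← h0]; simp
    · have hpos : 0 < w * q i + (1 - w) * ((1 - x) * pb i) := by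
        rcases eq_or_lt_of_le (show 0 ≤ w * q i + (1 - w) * ((1 - x) * pb i) by positivity)
          with h5 | h5
        · exfalso
          have h6 : 0 ≤ w * q i := by positivity
          have h7 : 0 ≤ (1 - w) * ((1 - x) * pb i) := by positivity
          have h8 : w * q i = 0 := by linarith
          have h9 : (1 - w) * ((1 - x) * pb i) = 0 := by linarith
          have h10 : q i = 0 := by simpa [hw0.ne'] using h8
          have h11 : pb i = 0 := by simpa [hw'.ne', hx'.ne'] using h9
          rw [h i h10, h11] at h0
          simp at h0
        · exact h5
      have hle : w * q i + (1 - w) * ((1 - x) * pb i) ≤ w * q i + (1 - w) * r i := by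
        have := mul_le_mul_of_nonneg_left (hrl i) hw'.le
        linarith
      refine mul_le_mul_of_nonneg_left ?_ h0.le
      refine Real.log_le_log (div_pos h0 (lt_of_lt_of_le hpos hle)) ?_
      exact div_le_div_of_nonneg_left h0.le hpos hle

/-- a simple bound, and the defining set is nonempty -/
lemma Kinf_feasible {m : ℕ} {f p : Fin (m + 1) → ℝ} {b μ : ℝ} (hb : 0 < b)
    (hf : ∀ i, 0 ≤ f i) (hfm : f (Fin.last m) = b) (hμ0 : 0 < μ) (hμb : μ < b)
    (hp : p ∈ stdSimplex ℝ (Fin (m + 1))) :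
    ∃ q ∈ stdSimplex ℝ (Fin (m + 1)), (∀ i, q i = 0 → p i = 0) ∧ μ ≤ ∑ i, f i * q i ∧
      klReal p q ≤ Real.log (b / (b - μ)) := by
  obtain ⟨x, hx⟩ : ∃ x, x = μ / b := ⟨_, rfl⟩
  have hx0 : 0 < x := hx ▸ div_pos hμ0 hb
  have hx1 : x < 1 := by rw [hx, div_lt_one hb]; exact hμb
  have hxb : x * b = μ := by rw [hx]; field_simp
  have hx' : 0 < 1 - x := by linarith
  refine ⟨_, mix_mem hp hx0.le hx1.le, mix_supp hp hx0.le hx1,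
    hxb ▸ mix_mean hp hf hfm hx1.le, ?_⟩
  rw [klReal_eq, log_ratio hb hμb hx]
  have e : Real.log (1 / (1 - x)) = ∑ i, p i * Real.log (1 / (1 - x)) := by
    rw [← Finset.sum_mul, hp.2, one_mul]
  rw [e]
  refine Finset.sum_le_sum fun i _ => ?_
  rcases eq_or_lt_of_le (hp.1 i) with h0 | h0
  · rw [← h0]; simp
  · refine mul_le_mul_of_nonneg_left ?_ h0.le
    have h3 : 0 ≤ x * (if i = Fin.last m then (1 : ℝ) else 0) := by
      split_ifs <;> simpa using hx0.le
    have h4 : 0 < (1 - x) * p i := by positivity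
    refine Real.log_le_log (by positivity) ?_
    rw [div_le_div_iff₀ (by linarith) hx']
    linarith

lemma Kinf_nonneg {m : ℕ} {f p : Fin (m + 1) → ℝ} {μ : ℝ}
    (hp : p ∈ stdSimplex ℝ (Fin (m + 1))) : 0 ≤ Kinf p μ f := by
  refine Real.sInf_nonneg ?_
  rintro x ⟨q, hq, h, -, rfl⟩
  exact klReal_nonneg hp hq h

/-- Truncation: move mass to the last atom. -/
lemma truncate {m : ℕ} {f p q : Fin (m + 1) → ℝ} {b : ℝ}
    (hf : ∀ i, f i ≤ b) (hfm : f (Fin.last m) = b)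
    (hp : p ∈ stdSimplex ℝ (Fin (m + 1))) (hpm : 0 < p (Fin.last m))
    (hq : q ∈ stdSimplex ℝ (Fin (m + 1))) (h : ∀ i, q i = 0 → p i = 0) :
    ∃ r ∈ stdSimplex ℝ (Fin (m + 1)), (∀ i, r i = 0 → p i = 0) ∧
      ∑ i, f i * q i ≤ ∑ i, f i * r i ∧ klReal p r ≤ klReal p q ∧
      ∀ i, p (Fin.last m) * r i ≤ p i := by
  set l := Fin.last m with hl
  obtain ⟨t, ht⟩ : ∃ t : Fin (m + 1) → ℝ, t = fun i => if i = l then q i else min (q i) (p i / p l) :=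
    ⟨_, rfl⟩
  have htl : t l = q l := by simp [ht]
  have htq : ∀ i, t i ≤ q i := fun i => by
    rw [ht]; dsimp only; split_ifs
    · exact le_rfl
    · exact min_le_left _ _
  have ht0 : ∀ i, 0 ≤ t i := fun i => by
    rw [ht]; dsimp only; split_ifs
    · exact hq.1 i
    · exact le_min (hq.1 i) (div_nonneg (hp.1 i) hpm.le)
  have htp : ∀ i, i ≠ l → p l * t i ≤ p i := fun i hi => by
    have : t i ≤ p i / p l := by rw [ht]; simp [hi]
    rw [le_div_iff₀ hpm] at this
    linarith
  have hts : ∀ i, t i = 0 → p i = 0 := fun i hi => by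
    by_contra hne
    have h1 : 0 < p i := lt_of_le_of_ne (hp.1 i) (Ne.symm hne)
    have h2 : 0 < q i := lt_of_le_of_ne (hq.1 i) (fun hh => hne (h i hh.symm))
    have : 0 < t i := by
      rw [ht]; dsimp only; split_ifs
      · exact h2
      · exact lt_min h2 (by positivity)
    linarith
  have hloss : ∀ i, p i * Real.log (p i / t i) ≤ p i * Real.log (p i / q i) + p l * (q i - t i) := by
    intro i
    have hd : 0 ≤ p l * (q i - t i) := mul_nonneg hpm.le (by linarith [htq i])
    rcases eq_or_ne (t i) (q i) with he | he
    · rw [he]; simp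
    rcases eq_or_lt_of_le (hp.1 i) with h0 | h0
    · rw [← h0]; simpa using hd
    have hil : i ≠ l := fun hh => he (by rw [hh, htl])
    have hti : t i = p i / p l := by
      have : t i = min (q i) (p i / p l) := by rw [ht]; simp [hil]
      rw [this] at he ⊢
      rcases min_choice (q i) (p i / p l) with h1 | h1
      · exact absurd h1 he
      · exact h1
    have hq0 : 0 < q i := lt_of_le_of_ne (hq.1 i) (fun hh => h0.ne' (h i hh.symm))
    have h1 : p i / t i = p l := by rw [hti]; field_simp
    have k := kl_key (hp.1 i) (hq.1 i) (h i) hpm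
    have h2 : p l * t i = p i := by rw [hti]; field_simp
    rw [h1]
    linarith
  obtain ⟨D, hD⟩ : ∃ D, D = ∑ i, (q i - t i) := ⟨_, rfl⟩
  have hD0 : 0 ≤ D := hD ▸ Finset.sum_nonneg fun i _ => by linarith [htq i]
  have hDt : ∑ i, t i = 1 - D := by rw [hD, Finset.sum_sub_distrib, hq.2]; ring
  have hql : 0 < q l := lt_of_le_of_ne (hq.1 l) (fun hh => hpm.ne' (h l hh.symm))
  have hr0 : ∀ i, 0 ≤ t i + (if i = l then D else 0) := fun i => by
    have := ht0 i
    split_ifs <;> linarith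
  have hrs : ∑ i, (t i + (if i = l then D else 0)) = 1 := by
    rw [Finset.sum_add_distrib, hDt]; simp
  refine ⟨fun i => t i + (if i = l then D else 0), ⟨hr0, hrs⟩, ?_, ?_, ?_, ?_⟩
  · intro i hi
    apply hts
    have := ht0 i
    dsimp only at hi
    split_ifs at hi <;> linarith
  · have e : ∑ i, f i * (t i + (if i = l then D else 0)) = ∑ i, f i * t i + b * D := by
      simp_rw [mul_add, Finset.sum_add_distrib]
      simp [hfm]
    rw [e, hD, Finset.mul_sum, ← Finset.sum_add_distrib]
    refine Finset.sum_le_sum fun i _ => ?_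
    nlinarith [hf i, htq i]
  · rw [klReal_eq, klReal_eq]
    have h1 : ∑ i, p i * Real.log (p i / t i) ≤
        ∑ i, p i * Real.log (p i / q i) + p l * D := by
      rw [hD, Finset.mul_sum, ← Finset.sum_add_distrib]
      exact Finset.sum_le_sum fun i _ => hloss i
    have h2 : ∑ i, p i * Real.log (p i / (t i + (if i = l then D else 0))) ≤
        ∑ i, (p i * Real.log (p i / t i) - (if i = l then p l * D else 0)) := by
      refine Finset.sum_le_sum fun i _ => ?_
      rcases eq_or_ne i l with rfl | hi
      · simp only [if_true]
        rw [htl]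
        have hle : q l + D ≤ 1 := by
          rw [← hrs, ← htl]
          have := Finset.single_le_sum (fun j _ => hr0 j) (Finset.mem_univ l)
          simpa using this
        have k := Real.log_le_sub_one_of_pos (show 0 < q l / (q l + D) by positivity)
        have k2 : q l / (q l + D) - 1 ≤ - D := by
          have : q l / (q l + D) - 1 = - (D / (q l + D)) := by field_simp; ring
          rw [this, neg_le_neg_iff, le_div_iff₀ (by positivity)]
          nlinarith
        have k3 : Real.log (p l / (q l + D)) =
            Real.log (p l / q l) + Real.log (q l / (q l + D)) := by
          rw [← Real.log_mul (by positivity) (by positivity)]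
          congr 1
          field_simp
        rw [k3]
        nlinarith
      · simp [hi]
    rw [Finset.sum_sub_distrib] at h2
    simp only [Finset.sum_ite_eq', Finset.mem_univ, if_true] at h2
    linarith
  · intro i
    dsimp only
    rcases eq_or_ne i l with rfl | hi
    · have := Finset.single_le_sum (fun j _ => hr0 j) (Finset.mem_univ l)
      rw [hrs] at this
      nlinarith
    · simpa [hi] using htp i hi

lemma norm_mem {m : ℕ} {s : Fin (m + 1) → ℝ} (hs : ∀ i, 0 ≤ s i) (h : 0 < ∑ i, s i) :
    (fun i => s i / ∑ j, s j) ∈ stdSimplex ℝ (Fin (m + 1)) := by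
  refine ⟨fun i => div_nonneg (hs i) h.le, ?_⟩
  rw [← Finset.sum_div, div_self h.ne']

lemma Kinf_lower {m : ℕ} {f α β : Fin (m + 1) → ℝ} {b μ A B : ℝ}
    (hf : ∀ i, f i ≤ b) (hfm : f (Fin.last m) = b)
    (hα : ∀ i, 0 ≤ α i) (hβ : ∀ i, 0 ≤ β i)
    (hαβm : 1 ≤ β (Fin.last m) + α (Fin.last m))
    (hA : ∑ i, α i = A) (hB : ∑ i, β i = B) (hA0 : 0 < A) (hB0 : 0 ≤ B)
    {q : Fin (m + 1) → ℝ} (hq : q ∈ stdSimplex ℝ (Fin (m + 1)))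
    (h : ∀ i, q i = 0 → (α i + β i) / (A + B) = 0) (hqμ : μ ≤ ∑ i, f i * q i) :
    A * Kinf (fun i => α i / A) μ f - B - B * Real.log (A + B) ≤
      (A + B) * klReal (fun i => (α i + β i) / (A + B)) q := by
  have hS : 0 < A + B := by linarith
  have hp : (fun i => (α i + β i) / (A + B)) ∈ stdSimplex ℝ (Fin (m + 1)) := by
    have := norm_mem (s := fun i => α i + β i) (fun i => add_nonneg (hα i) (hβ i))
      (by rw [Finset.sum_add_distrib, hA, hB]; exact hS)
    simpa only [Finset.sum_add_distrib, hA, hB] using this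
  have hpa : (fun i => α i / A) ∈ stdSimplex ℝ (Fin (m + 1)) := by
    have := norm_mem hα (by rw [hA]; exact hA0)
    simpa only [hA] using this
  obtain ⟨r, hr, hrs, hrm, hrk, hrb⟩ := truncate hf hfm hp
    (by have : 0 < α (Fin.last m) + β (Fin.last m) := by linarith
        positivity) hq h
  have hrb' : ∀ i, r i ≤ α i + β i := fun i => by
    have h1 := hrb i
    have h2 : (α (Fin.last m) + β (Fin.last m)) * r i ≤ α i + β i := by
      have := mul_le_mul_of_nonneg_left h1 hS.le
      field_simp at this
      linarith
    nlinarith [hr.1 i]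
  have hsupp : ∀ i, r i = 0 → α i + β i = 0 := fun i hi => by
    have := hrs i hi
    simpa [hS.ne'] using this
  have hKa : Kinf (fun i => α i / A) μ f ≤ klReal (fun i => α i / A) r := by
    refine Kinf_le hpa hr (fun i hi => ?_) (hqμ.trans hrm)
    have h1 := hsupp i hi
    have h2 : α i = 0 := by linarith [hα i, hβ i]
    simp [h2]
  have hmain : A * klReal (fun i => α i / A) r - B - B * Real.log (A + B) ≤
      (A + B) * klReal (fun i => (α i + β i) / (A + B)) r := by
    rw [klReal_eq, klReal_eq]
    have hw : A * Real.log ((A + B) / A) ≤ B := by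
      have := Real.log_le_sub_one_of_pos (show 0 < (A + B) / A by positivity)
      have := mul_le_mul_of_nonneg_left this hA0.le
      have e : A * ((A + B) / A - 1) = B := by field_simp; ring
      linarith
    have hsum : ∑ i, (A * (α i / A * Real.log (α i / A / r i)) - α i * Real.log ((A + B) / A)
        - β i * Real.log (A + B)) ≤
        ∑ i, (A + B) * ((α i + β i) / (A + B) * Real.log ((α i + β i) / (A + B) / r i)) := by
      refine Finset.sum_le_sum fun i _ => ?_
      have ha := hα i
      have hb := hβ i
      have e1 : A * (α i / A * Real.log (α i / A / r i)) = α i * Real.log (α i / A / r i) := by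
        field_simp
      have e2 : (A + B) * ((α i + β i) / (A + B) * Real.log ((α i + β i) / (A + B) / r i)) =
          (α i + β i) * Real.log ((α i + β i) / (A + B) / r i) := by
        field_simp
      rw [e1, e2]
      rcases eq_or_lt_of_le (add_nonneg ha hb) with h0 | h0
      · have h1 : α i = 0 := by linarith
        have h2 : β i = 0 := by linarith
        simp [h1, h2]
      have hr0 : 0 < r i := lt_of_le_of_ne (hr.1 i) (fun hh => h0.ne' (hsupp i hh.symm))
      have hb1 : - Real.log (A + B) ≤ Real.log ((α i + β i) / (A + B) / r i) := by
        rw [← Real.log_inv]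
        refine Real.log_le_log (by positivity) ?_
        rw [le_div_iff₀ hr0, inv_mul_eq_div]
        exact div_le_div_of_nonneg_right (hrb' i) hS.le
      have hb2 : β i * (- Real.log (A + B)) ≤
        β i * Real.log ((α i + β i) / (A + B) / r i) := mul_le_mul_of_nonneg_left hb1 hb
      have ha2 : α i * (Real.log (α i / A / r i) - Real.log ((A + B) / A)) ≤
          α i * Real.log ((α i + β i) / (A + B) / r i) := by
        rcases eq_or_lt_of_le ha with h1 | h1
        · rw [← h1]; simp
        refine mul_le_mul_of_nonneg_left ?_ ha
        rw [← Real.log_div (by positivity) (by positivity)]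
        refine Real.log_le_log (by positivity) ?_
        have : α i / A / r i / ((A + B) / A) = α i / (A + B) / r i := by field_simp
        rw [this]
        gcongr
        linarith
      linarith
    rw [Finset.sum_sub_distrib, Finset.sum_sub_distrib, ← Finset.mul_sum, ← Finset.mul_sum,
      ← Finset.sum_mul, ← Finset.sum_mul, hA, hB] at hsum
    linarith
  have h1 := mul_le_mul_of_nonneg_left hKa hA0.le
  have h2 := mul_le_mul_of_nonneg_left hrk hS.le
  linarith

/-- **Stability of `Kinf` under a shift of the underlying distribution** (Lemma on
distribution shifts). For a nonzero nonnegative `s`, `p̄_s(i) = s_i / ∑_j s_j`. -/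
theorem kinf_distribution_shift
    (m : ℕ) (hm : 1 ≤ m) (b : ℝ) (hb : 0 < b)
    (f : Fin (m + 1) → ℝ) (hf : ∀ i, f i ∈ Set.Icc (0 : ℝ) b)
    (hf0 : f 0 = 0) (hfm : f (Fin.last m) = b)
    (α β : Fin (m + 1) → ℝ) (hα : ∀ i, 0 ≤ α i) (hβ : ∀ i, 0 ≤ β i)
    (hαβm : 1 ≤ β (Fin.last m) + α (Fin.last m))
    (hαsum : 0 < ∑ i, α i)
    (μ : ℝ) (hμ : μ ∈ Set.Ioo (0 : ℝ) b) :
    Kinf (fun i => α i / ∑ j, α j) μ f -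
        (3 * (∑ i, β i) / (∑ i, α i)) *
          Real.log (b * ((∑ i, α i) + ∑ i, β i) / (b - μ))
      ≤ Kinf (fun i => (α i + β i) / ∑ j, (α j + β j)) μ f ∧
    Kinf (fun i => (α i + β i) / ∑ j, (α j + β j)) μ f ≤
      ((∑ i, α i) * Kinf (fun i => α i / ∑ j, α j) μ f +
        (∑ i, β i) * Real.log (b / (b - μ))) / ((∑ i, α i) + ∑ i, β i) := by
  obtain ⟨hμ0, hμb⟩ := hμ
  have hf1 : ∀ i, 0 ≤ f i := fun i => (hf i).1
  have hf2 : ∀ i, f i ≤ b := fun i => (hf i).2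
  have hβl : β (Fin.last m) ≤ ∑ i, β i :=
    Finset.single_le_sum (fun j _ => hβ j) (Finset.mem_univ _)
  have hαl : α (Fin.last m) ≤ ∑ i, α i :=
    Finset.single_le_sum (fun j _ => hα j) (Finset.mem_univ _)
  have hB0 : 0 ≤ ∑ i, β i := Finset.sum_nonneg fun i _ => hβ i
  simp only [Finset.sum_add_distrib]
  obtain ⟨A, hA⟩ : ∃ A, ∑ i, α i = A := ⟨_, rfl⟩
  obtain ⟨B, hB⟩ : ∃ B, ∑ i, β i = B := ⟨_, rfl⟩
  rw [hA] at hαsum hαl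
  rw [hB] at hB0 hβl
  simp only [hA, hB]
  have hS : 0 < A + B := by linarith
  have hp : (fun i => (α i + β i) / (A + B)) ∈ stdSimplex ℝ (Fin (m + 1)) := by
    have := norm_mem (s := fun i => α i + β i) (fun i => add_nonneg (hα i) (hβ i))
      (by rw [Finset.sum_add_distrib, hA, hB]; exact hS)
    simpa only [Finset.sum_add_distrib, hA, hB] using this
  have hpa : (fun i => α i / A) ∈ stdSimplex ℝ (Fin (m + 1)) := by
    have := norm_mem hα (by rw [hA]; exact hαsum)
    simpa only [hA] using this
  have hbμ : 0 < b - μ := by linarith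
  have hl0 : 0 ≤ Real.log (b / (b - μ)) :=
    Real.log_nonneg (by rw [le_div_iff₀ hbμ]; linarith)
  have hKa : Kinf (fun i => α i / A) μ f ≤ Real.log (b / (b - μ)) := by
    obtain ⟨q, hq, hs, hqm, hk⟩ := Kinf_feasible hb hf1 hfm hμ0 hμb hpa
    exact (Kinf_le hpa hq hs hqm).trans hk
  constructor
  · have hK0 : 0 ≤ Kinf (fun i => (α i + β i) / (A + B)) μ f := Kinf_nonneg hp
    obtain ⟨q0, hq0, hs0, hqm0, hk0⟩ := Kinf_feasible hb hf1 hfm hμ0 hμb hp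
    have hKp := (Kinf_le hp hq0 hs0 hqm0).trans hk0
    have hlow : (A * Kinf (fun i => α i / A) μ f - B - B * Real.log (A + B)) / (A + B) ≤
        Kinf (fun i => (α i + β i) / (A + B)) μ f := by
      refine le_csInf ⟨_, q0, hq0, hs0, hqm0, rfl⟩ ?_
      rintro x ⟨q, hq, hs, hqm, rfl⟩
      rw [div_le_iff₀ hS]
      have := Kinf_lower hf2 hfm hα hβ hαβm hA hB hαsum hB0 hq hs hqm
      linarith
    rw [div_le_iff₀ hS] at hlow
    have hlS : 0 ≤ Real.log (A + B) := Real.log_nonneg (by linarith)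
    have hL : Real.log (b * (A + B) / (b - μ)) = Real.log (b / (b - μ)) + Real.log (A + B) := by
      rw [← Real.log_mul (by positivity) (by positivity)]
      congr 1
      ring
    have hKz : Real.log (b * (A + B) / (b - μ)) < 1 / 2 → 3 * B < A →
        Kinf (fun i => α i / A) μ f ≤ 0 := by
      intro h1 h2
      rw [Real.log_lt_iff_lt_exp (by positivity)] at h1
      have he : Real.exp (1 / 2) < 1.65 := by
        have h3 : Real.exp (1 / 2) * Real.exp (1 / 2) = Real.exp 1 := by
          rw [← Real.exp_add]; norm_num
        have h4 := Real.exp_one_lt_d9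
        nlinarith [Real.exp_pos (1 / 2)]
      have h3 := h1.trans he
      rw [div_lt_iff₀ hbμ] at h3
      have hkz : klReal (fun i => α i / A) (fun i => α i / A) = 0 := by
        rw [klReal_eq]
        refine Finset.sum_eq_zero fun i _ => ?_
        rcases eq_or_ne (α i / A) 0 with h0 | h0
        · simp [h0]
        · simp only [div_self h0, Real.log_one, mul_zero]
      rw [← hkz]
      refine Kinf_le hpa hpa (fun i hi => hi) ?_
      have h5 : b * (α (Fin.last m) / A) ≤ ∑ i, f i * (α i / A) := by
        rw [← hfm]
        exact Finset.single_le_sum (f := fun i => f i * (α i / A))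
          (fun j _ => mul_nonneg (hf1 j) (hpa.1 j)) (Finset.mem_univ _)
      refine le_trans ?_ h5
      rw [← mul_div_assoc, le_div_iff₀ hαsum]
      have h6 : 1 - B ≤ α (Fin.last m) := by linarith
      have h7 : A * (1.65 - (A + B)) ≤ 1.65 * (1 - B) := by
        nlinarith [sq_nonneg (A + B - 1.1)]
      have h8 : μ * A * 1.65 ≤ b * (A * (1.65 - (A + B))) := by nlinarith
      have h9 := mul_le_mul_of_nonneg_left h7 hb.le
      have h10 := mul_le_mul_of_nonneg_left h6 hb.le
      linarith
    obtain ⟨L, hLd⟩ : ∃ L, Real.log (b * (A + B) / (b - μ)) = L := ⟨_, rfl⟩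
    rw [hLd] at hL hKz ⊢
    have hL0 : 0 ≤ L := by linarith
    rw [sub_le_iff_le_add]
    rcases le_or_gt A (3 * B) with hc | hc
    · have h1 : 1 ≤ 3 * B / A := by rw [le_div_iff₀ hαsum]; linarith
      nlinarith
    rcases lt_or_ge L (1 / 2) with hc2 | hc2
    · have := hKz hc2 hc
      have : 0 ≤ 3 * B / A * L := by positivity
      linarith
    · have e : 3 * B / A * L = 3 * B * L / A := by ring
      rw [e, ← sub_le_iff_le_add', le_div_iff₀ hαsum]
      nlinarith
  · have hne := Kinf_feasible hb hf1 hfm hμ0 hμb hpa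
    obtain ⟨q0, hq0, hs0, hqm0, -⟩ := hne
    rw [le_div_iff₀ hS, ← sub_le_iff_le_add, ← div_le_iff₀' hαsum]
    refine le_csInf ⟨_, q0, hq0, hs0, hqm0, rfl⟩ ?_
    rintro x ⟨q, hq, hs, hqm, rfl⟩
    rw [div_le_iff₀' hαsum]
    rcases eq_or_lt_of_le hB0 with h0 | h0
    · have hz : ∀ i, β i = 0 := by
        rw [← h0, Finset.sum_eq_zero_iff_of_nonneg (fun i _ => hβ i)] at hB
        exact fun i => hB i (Finset.mem_univ i)
      have := mul_le_mul_of_nonneg_left (Kinf_le hpa hq hs hqm) hαsum.le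
      simp only [hz, ← h0, add_zero, zero_mul, sub_zero]
      linarith
    · have hpb : (fun i => β i / B) ∈ stdSimplex ℝ (Fin (m + 1)) := by
        have := norm_mem hβ (by rw [hB]; exact h0)
        simpa only [hB] using this
      have := Kinf_upper (w := A / (A + B)) hb hf1 hfm hμ0 hμb hpa hpb (by positivity)
        (by rw [div_lt_one hS]; linarith) hq hs hqm
      have e : (fun i => A / (A + B) * (α i / A) + (1 - A / (A + B)) * (β i / B)) =
          fun i => (α i + β i) / (A + B) := by
        funext i
        field_simp
        ring
      rw [e] at this
      have h3 := mul_le_mul_of_nonneg_left this hS.le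
      have e2 : (A + B) * (A / (A + B) * klReal (fun i => α i / A) q +
          (1 - A / (A + B)) * Real.log (b / (b - μ))) =
          A * klReal (fun i => α i / A) q + B * Real.log (b / (b - μ)) := by
        field_simp
        ring
      rw [e2] at h3
      linarith

end
end
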